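/- For 1 < p < 2, the first Fourier sine coefficient satisfies a_1(p) = 2∫₀¹ sin_p(π_p x) sin(πx) dx ≥ 1, and hence b_1(p) = (π/π_p) a_1(p) ≥ π/π_p. Moreover for p > 2, a_1(p) > 8/π², using the strict concavity of sin_p(π_p x) on (0,1/2). -/

import Mathlib

open Real Set

noncomputable def Fp (p y : ℝ) : ℝ := ∫ t in (0:ℝ)..y, (1 - t ^ p) ^ (-(1/p))

noncomputable def pip (p : ℝ) : ℝ := 2 * Fp p 1

/-- The density of `Fp`. -/
noncomputable def wp (p t : ℝ) : ℝ := (1 - t ^ p) ^ (-(1/p))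

theorem wp_base {p t : ℝ} (hp : 1 < p) (h0 : 0 ≤ t) (h1 : t < 1) : 0 < 1 - t ^ p := by
  have := Real.rpow_lt_one h0 h1 (by linarith : 0 < p)
  linarith

theorem wp_pos {p t : ℝ} (hp : 1 < p) (h0 : 0 ≤ t) (h1 : t < 1) : 0 < wp p t :=
  Real.rpow_pos_of_pos (wp_base hp h0 h1) _

theorem wp_mono {p t u : ℝ} (hp : 1 < p) (h0 : 0 ≤ t) (htu : t ≤ u) (h1 : u < 1) :
    wp p t ≤ wp p u := by
  have : t ^ p ≤ u ^ p := Real.rpow_le_rpow h0 htu (by linarith)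
  have hp' : 0 < 1 / p := by positivity
  exact Real.rpow_le_rpow_of_nonpos (wp_base hp (h0.trans htu) h1) (by linarith) (by linarith)

theorem wp_zero {p : ℝ} (hp : 1 < p) : wp p 0 = 1 := by
  simp [wp, Real.zero_rpow (by linarith : p ≠ 0)]

theorem wp_ge_one {p t : ℝ} (hp : 1 < p) (h0 : 0 ≤ t) (h1 : t < 1) : 1 ≤ wp p t := by
  rw [← wp_zero hp]; exact wp_mono hp le_rfl h0 h1

theorem wp_gt_one {p t : ℝ} (hp : 1 < p) (h0 : 0 < t) (h1 : t < 1) : 1 < wp p t := by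
  have : 0 < t ^ p := Real.rpow_pos_of_pos h0 p
  have hp' : 0 < 1 / p := by positivity
  exact Real.one_lt_rpow_of_pos_of_lt_one_of_neg (wp_base hp h0.le h1) (by linarith) (by linarith)

theorem wp_int01 {p : ℝ} (hp : 1 < p) :
    IntervalIntegrable (wp p) MeasureTheory.volume 0 1 := by
  have hp' : 0 < 1 / p := by positivity
  have hp1 : 1 / p < 1 := by rw [div_lt_one (by linarith)]; exact hp
  have hr : (-1:ℝ) < -(1/p) := by linarith
  have h := (intervalIntegral.intervalIntegrable_rpow' (a := 1) (b := 0) hr).comp_sub_left 1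
  simp only [sub_self, sub_zero] at h
  refine h.mono_fun' ?_ ?_
  · apply Measurable.aestronglyMeasurable
    unfold wp
    fun_prop
  · rw [Filter.EventuallyLE, MeasureTheory.ae_restrict_iff' measurableSet_uIoc]
    refine Filter.Eventually.of_forall fun t ht => ?_
    rw [uIoc_of_le zero_le_one] at ht
    rcases eq_or_lt_of_le ht.2 with h1 | h1
    · subst h1
      simp only [wp, Real.one_rpow, sub_self, Real.norm_eq_abs]
      exact (abs_of_nonneg (Real.rpow_nonneg le_rfl _)).le
    · rw [Real.norm_of_nonneg (wp_pos hp ht.1.le h1).le]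
      have : t ^ p ≤ t ^ (1:ℝ) := Real.rpow_le_rpow_of_exponent_ge ht.1 ht.2 hp.le
      rw [Real.rpow_one] at this
      exact Real.rpow_le_rpow_of_nonpos (by linarith) (by linarith) (by linarith)

theorem wp_int {p a b : ℝ} (hp : 1 < p) (ha : a ∈ Icc (0:ℝ) 1) (hb : b ∈ Icc (0:ℝ) 1) :
    IntervalIntegrable (wp p) MeasureTheory.volume a b := by
  refine (wp_int01 hp).mono_set ?_
  rw [uIcc_of_le zero_le_one]
  exact uIcc_subset_Icc ha hb

theorem Fp_sub {p a b : ℝ} (hp : 1 < p) (ha : a ∈ Icc (0:ℝ) 1) (hb : b ∈ Icc (0:ℝ) 1) :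
    Fp p b - Fp p a = ∫ t in a..b, wp p t := by
  have h0 : (0:ℝ) ∈ Icc (0:ℝ) 1 := by simp
  exact intervalIntegral.integral_interval_sub_left (wp_int hp h0 hb) (wp_int hp h0 ha)

theorem Fp_zero (p : ℝ) : Fp p 0 = 0 := by simp [Fp]

theorem Fp_cont {p : ℝ} (hp : 1 < p) : ContinuousOn (Fp p) (Icc 0 1) := by
  have := intervalIntegral.continuousOn_primitive_interval' (wp_int01 hp) (left_mem_uIcc)
  rw [uIcc_of_le zero_le_one] at this
  exact this

theorem int_mono_Ioo {f g : ℝ → ℝ} {a b : ℝ} (hab : a ≤ b)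
    (hf : IntervalIntegrable f MeasureTheory.volume a b)
    (hg : IntervalIntegrable g MeasureTheory.volume a b)
    (h : ∀ x ∈ Ioo a b, f x ≤ g x) : ∫ x in a..b, f x ≤ ∫ x in a..b, g x :=
  intervalIntegral.integral_mono_on_of_le_Ioo hab hf hg h

theorem Fp_expand {p a b : ℝ} (hp : 1 < p) (ha : a ∈ Icc (0:ℝ) 1) (hb : b ∈ Icc (0:ℝ) 1)
    (hab : a ≤ b) : b - a ≤ Fp p b - Fp p a := by
  rw [Fp_sub hp ha hb]
  have : ∫ t in a..b, (1:ℝ) ≤ ∫ t in a..b, wp p t :=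
    int_mono_Ioo hab (by simp) (wp_int hp ha hb)
      fun x hx => wp_ge_one hp (ha.1.trans hx.1.le) (hx.2.trans_le hb.2)
  simpa using this

theorem Fp_one_pos {p : ℝ} (hp : 1 < p) : 0 < Fp p 1 := by
  have := Fp_expand hp (a := 0) (b := 1) (by simp) (by simp) zero_le_one
  rw [Fp_zero] at this
  linarith

theorem ratio_mono {p t u : ℝ} (hp : 1 < p) (hp2 : p < 2) (h0 : 0 < t) (htu : t ≤ u)
    (h1 : u < 1) : wp p t * wp 2 u ≤ wp p u * wp 2 t := by
  have hmono : MonotoneOn (fun x : ℝ => -(1/p) * Real.log (1 - x ^ p)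
      - (-(1/2) * Real.log (1 - x ^ (2:ℝ)))) (Ioo 0 1) := by
    have hd : ∀ x ∈ Ioo (0:ℝ) 1, HasDerivAt (fun x : ℝ => -(1/p) * Real.log (1 - x ^ p)
      - (-(1/2) * Real.log (1 - x ^ (2:ℝ))))
        (-(1/p) * (-(p * x ^ (p-1)) / (1 - x ^ p)) -
          (-(1/2) * (-(2 * x ^ ((2:ℝ)-1)) / (1 - x ^ (2:ℝ))))) x := by
      intro x hx
      have a1 := ((Real.hasDerivAt_rpow_const (p := p) (Or.inl hx.1.ne')).const_sub 1).log
        (wp_base hp hx.1.le hx.2).ne'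
      have a2 := ((Real.hasDerivAt_rpow_const (p := (2:ℝ)) (Or.inl hx.1.ne')).const_sub 1).log
        (wp_base one_lt_two hx.1.le hx.2).ne'
      exact (a1.const_mul _).sub (a2.const_mul _)
    refine monotoneOn_of_deriv_nonneg (convex_Ioo _ _)
      (fun x hx => (hd x hx).continuousAt.continuousWithinAt)
      (fun x hx => ?_) (fun x hx => ?_)
    · rw [interior_Ioo] at hx
      exact (hd x hx).differentiableAt.differentiableWithinAt
    · rw [interior_Ioo] at hx
      rw [(hd x hx).deriv]
      have b1 := wp_base hp hx.1.le hx.2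
      have b2 := wp_base one_lt_two hx.1.le hx.2
      have e1 : x ^ (p - 1) = x ^ (p - 2) * x := by
        rw [← Real.rpow_add_one hx.1.ne']; congr 1; ring
      have e2 : x ^ p = x ^ (p - 2) * x ^ 2 := by
        rw [← Real.rpow_natCast x 2, ← Real.rpow_add hx.1]; congr 1; norm_num
      have e3 : x ^ ((2:ℝ) - 1) = x := by norm_num
      have e4 : x ^ (2:ℝ) = x ^ 2 := Real.rpow_two x
      have hq : 1 ≤ x ^ (p - 2) :=
        Real.one_le_rpow_of_pos_of_le_one_of_nonpos hx.1 hx.2.le (by linarith)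
      rw [e2] at b1
      rw [e4] at b2
      rw [e1, e2, e3, e4]
      set q := x ^ (p - 2)
      have : -(1/p) * (-(p * (q * x)) / (1 - q * x ^ 2)) -
          (-(1/2) * (-(2 * x) / (1 - x ^ 2))) = x * (q - 1) / ((1 - q * x ^ 2) * (1 - x ^ 2)) := by
        field_simp
        ring
      rw [this]
      have := hx.1
      have : 0 ≤ q - 1 := by linarith
      positivity
  have h := hmono ⟨h0, htu.trans_lt h1⟩ ⟨h0.trans_le htu, h1⟩ htu
  simp only at h
  unfold wp
  rw [Real.rpow_def_of_pos (wp_base hp h0.le (htu.trans_lt h1)),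
    Real.rpow_def_of_pos (wp_base hp (h0.le.trans htu) h1),
    Real.rpow_def_of_pos (wp_base one_lt_two h0.le (htu.trans_lt h1)),
    Real.rpow_def_of_pos (wp_base one_lt_two (h0.le.trans htu) h1),
    ← Real.exp_add, ← Real.exp_add, Real.exp_le_exp]
  linarith

theorem F2_arcsin {y : ℝ} (hy : y ∈ Icc (0:ℝ) 1) : Fp 2 y = Real.arcsin y := by
  have : ∫ t in (0:ℝ)..y, wp 2 t = Real.arcsin y - Real.arcsin 0 := by
    refine intervalIntegral.integral_eq_sub_of_hasDerivAt_of_le hy.1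
      Real.continuous_arcsin.continuousOn (fun x hx => ?_)
      (wp_int one_lt_two (by simp) hy)
    have hx1 : x < 1 := hx.2.trans_le hy.2
    have := Real.hasDerivAt_arcsin (x := x) (by linarith [hx.1]) hx1.ne
    have hb := wp_base one_lt_two hx.1.le hx1
    have e : wp 2 x = 1 / √(1 - x ^ 2) := by
      unfold wp
      rw [Real.rpow_neg hb.le, Real.rpow_two, ← Real.sqrt_eq_rpow, one_div]
    rw [e]
    exact this
  rw [Real.arcsin_zero, sub_zero] at this
  exact this

theorem Fp_cmp {p y : ℝ} (hp : 1 < p) (hp2 : p < 2) (hy : y ∈ Icc (0:ℝ) 1) :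
    Fp p y * (π / 2) ≤ Real.arcsin y * Fp p 1 := by
  rcases eq_or_lt_of_le hy.1 with h0 | h0
  · subst h0; simp [Fp_zero]
  rcases eq_or_lt_of_le hy.2 with h1 | h1
  · subst h1; simp [mul_comm]
  have m0 : (0:ℝ) ∈ Icc (0:ℝ) 1 := by simp
  have m1 : (1:ℝ) ∈ Icc (0:ℝ) 1 := by simp
  have hA : Fp p y * wp 2 y ≤ wp p y * Fp 2 y := by
    have : ∫ t in (0:ℝ)..y, wp p t * wp 2 y ≤ ∫ t in (0:ℝ)..y, wp p y * wp 2 t :=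
      int_mono_Ioo h0.le ((wp_int hp m0 hy).mul_const _) ((wp_int one_lt_two m0 hy).const_mul _)
        fun t ht => ratio_mono hp hp2 ht.1 ht.2.le h1
    rw [intervalIntegral.integral_mul_const, intervalIntegral.integral_const_mul] at this
    exact this
  have hB : wp p y * (Fp 2 1 - Fp 2 y) ≤ (Fp p 1 - Fp p y) * wp 2 y := by
    rw [Fp_sub hp hy m1, Fp_sub one_lt_two hy m1, ← intervalIntegral.integral_mul_const,
      ← intervalIntegral.integral_const_mul]
    exact int_mono_Ioo h1.le ((wp_int one_lt_two hy m1).const_mul _)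
      ((wp_int hp hy m1).mul_const _) fun t ht => ratio_mono hp hp2 h0 ht.1.le ht.2
  have hFy : 0 ≤ Fp p y := by
    have := Fp_expand hp m0 hy h0.le
    rw [Fp_zero] at this; linarith
  have hF2y : 0 ≤ Fp 2 y := by
    have := Fp_expand one_lt_two m0 hy h0.le
    rw [Fp_zero] at this; linarith
  have hD : 0 ≤ Fp 2 1 - Fp 2 y := by
    have := Fp_expand one_lt_two hy m1 h1.le
    linarith
  have wa := wp_pos hp h0.le h1
  have wb := wp_pos one_lt_two h0.le h1
  rw [← Real.arcsin_one, ← F2_arcsin hy, ← F2_arcsin m1]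
  have key : (wp p y * wp 2 y) * (Fp p y * (Fp 2 1 - Fp 2 y)) ≤
      (wp p y * wp 2 y) * (Fp 2 y * (Fp p 1 - Fp p y)) := by
    have := mul_le_mul hA hB (by positivity) (by positivity)
    linarith
  have := le_of_mul_le_mul_left key (by positivity)
  linarith

theorem Fp_strict {p y : ℝ} (hp : 1 < p) (hy : y ∈ Ioo (0:ℝ) 1) :
    Fp p y < y * Fp p 1 := by
  have m0 : (0:ℝ) ∈ Icc (0:ℝ) 1 := by simp
  have m1 : (1:ℝ) ∈ Icc (0:ℝ) 1 := by simp
  have hy' : y ∈ Icc (0:ℝ) 1 := Ioo_subset_Icc_self hy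
  have hA : Fp p y < wp p y * y := by
    have : ∫ t in (0:ℝ)..y, wp p t < ∫ t in (0:ℝ)..y, wp p y := by
      refine intervalIntegral.integral_lt_integral_of_continuousOn_of_le_of_exists_lt hy.1
        ?_ continuousOn_const (fun t ht => wp_mono hp ht.1.le ht.2 hy.2)
        ⟨0, by simp [hy.1.le], ?_⟩
      · intro x hx
        have hb := wp_base hp hx.1 (hx.2.trans_lt hy.2)
        apply ContinuousAt.continuousWithinAt
        unfold wp
        refine ContinuousAt.rpow_const ?_ (Or.inl hb.ne')
        exact continuousAt_const.sub (Real.continuousAt_rpow_const _ _ (Or.inr (by linarith)))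
      · rw [wp_zero hp]; exact wp_gt_one hp hy.1 hy.2
    rw [intervalIntegral.integral_const] at this
    simp only [sub_zero, smul_eq_mul] at this
    rw [mul_comm]
    exact this
  have hB : wp p y * (1 - y) ≤ Fp p 1 - Fp p y := by
    rw [Fp_sub hp hy' m1]
    have : ∫ t in y..(1:ℝ), wp p y ≤ ∫ t in y..(1:ℝ), wp p t :=
      int_mono_Ioo hy.2.le (by simp) (wp_int hp hy' m1)
        fun t ht => wp_mono hp hy.1.le ht.1.le ht.2
    rw [intervalIntegral.integral_const, smul_eq_mul] at this
    linarith
  nlinarith [hy.1, hy.2, mul_lt_mul_of_pos_right hA (sub_pos.2 hy.2),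
    mul_le_mul_of_nonneg_right hB hy.1.le]

theorem int_sin_sq : ∫ x in (0:ℝ)..1, Real.sin (π * x) * Real.sin (π * x) = 1 / 2 := by
  have hd : ∀ x ∈ uIcc (0:ℝ) 1, HasDerivAt
      (fun x : ℝ => x / 2 - Real.sin (π * x) * Real.cos (π * x) / (2 * π))
      (Real.sin (π * x) * Real.sin (π * x)) x := by
    intro x _
    have hl : HasDerivAt (fun x : ℝ => π * x) π x := by
      simpa using (hasDerivAt_id x).const_mul π
    refine (((hasDerivAt_id x).div_const 2).sub
      ((hl.sin.mul hl.cos).div_const (2 * π))).congr_deriv ?_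
    have := Real.sin_sq_add_cos_sq (π * x)
    field_simp
    nlinarith
  rw [intervalIntegral.integral_eq_sub_of_hasDerivAt hd
    (by apply Continuous.intervalIntegrable; fun_prop)]
  simp

theorem int_x_sin : ∫ x in (0:ℝ)..(1/2), (2 * x) * Real.sin (π * x) = 2 / π ^ 2 := by
  have hd : ∀ x ∈ uIcc (0:ℝ) (1/2), HasDerivAt
      (fun x : ℝ => 2 * (Real.sin (π * x) / π ^ 2 - x * Real.cos (π * x) / π))
      ((2 * x) * Real.sin (π * x)) x := by
    intro x _
    have hl : HasDerivAt (fun x : ℝ => π * x) π x := by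
      simpa using (hasDerivAt_id x).const_mul π
    refine (((hl.sin.div_const (π ^ 2)).sub
      (((hasDerivAt_id x).mul hl.cos).div_const π)).const_mul 2).congr_deriv ?_
    simp only [id]
    field_simp
    ring
  rw [intervalIntegral.integral_eq_sub_of_hasDerivAt hd
    (by apply Continuous.intervalIntegrable; fun_prop)]
  have : π * (1 / 2) = π / 2 := by ring
  simp only [this, Real.sin_pi_div_two, Real.cos_pi_div_two]
  simp
  ring

theorem first_fourier_coeff_bounds (p : ℝ) (hp : 1 < p) (s : ℝ → ℝ)
    (hinv₁ : ∀ y ∈ Icc (0:ℝ) 1, s (Fp p y) = y)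
    (hinv₂ : ∀ x ∈ Icc (0:ℝ) (pip p / 2), Fp p (s x) = x)
    (hodd : ∀ x, s (-x) = -s x)
    (hsym : ∀ x, s (pip p / 2 - x) = s (pip p / 2 + x)) :
    (p < 2 →
      1 ≤ 2 * ∫ x in (0:ℝ)..1, s (pip p * x) * Real.sin (π * x) ∧
      π / pip p ≤ 2 * ∫ x in (0:ℝ)..1, deriv s (pip p * x) * Real.cos (π * x)) ∧
    (2 < p →
      8 / π^2 < 2 * ∫ x in (0:ℝ)..1, s (pip p * x) * Real.sin (π * x)) := by
  have hF1 := Fp_one_pos hp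
  have hP : 0 < pip p := by unfold pip; linarith
  have hF1P : Fp p 1 = pip p / 2 := by unfold pip; ring
  have hval : ∀ x ∈ Icc (0:ℝ) (pip p / 2), s x ∈ Icc (0:ℝ) 1 := by
    intro x hx
    have hiv := intermediate_value_Icc zero_le_one (Fp_cont hp)
    rw [Fp_zero, hF1P] at hiv
    obtain ⟨y, hy, hyx⟩ := hiv hx
    rw [← hyx, hinv₁ y hy]
    exact hy
  have hlip : ∀ x ∈ Icc (0:ℝ) (pip p / 2), ∀ z ∈ Icc (0:ℝ) (pip p / 2),
      |s x - s z| ≤ |x - z| := by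
    intro x hx z hz
    have ex := hinv₂ x hx
    have ez := hinv₂ z hz
    rcases le_total (s x) (s z) with h | h
    · have := Fp_expand hp (hval x hx) (hval z hz) h
      rw [ex, ez] at this
      rw [abs_sub_comm, abs_sub_comm x z, abs_of_nonneg (by linarith)]
      exact this.trans (le_abs_self _)
    · have := Fp_expand hp (hval z hz) (hval x hx) h
      rw [ex, ez] at this
      rw [abs_of_nonneg (by linarith)]
      exact this.trans (le_abs_self _)
  have hrefl : ∀ z, s (pip p - z) = s z := by
    intro z
    have := hsym (pip p / 2 - z)
    rw [show pip p / 2 - (pip p / 2 - z) = z by ring,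
      show pip p / 2 + (pip p / 2 - z) = pip p - z by ring] at this
    exact this.symm
  have hs0 : s 0 = 0 := by
    have := hinv₁ 0 (by simp)
    rwa [Fp_zero] at this
  have hsP : s (pip p) = 0 := by
    have := hrefl 0
    rwa [sub_zero, hs0] at this
  have hfold : ∀ z, s z = s (pip p / 2 - |z - pip p / 2|) := by
    intro z
    rcases le_total z (pip p / 2) with h | h
    · rw [abs_of_nonpos (by linarith)]; congr 1; ring
    · rw [abs_of_nonneg (by linarith), ← hrefl z]; congr 1; ring
  have hmem : ∀ z ∈ Icc (0:ℝ) 1,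
      pip p / 2 - |pip p * z - pip p / 2| ∈ Icc (0:ℝ) (pip p / 2) := by
    intro z hz
    refine ⟨?_, by linarith [abs_nonneg (pip p * z - pip p / 2)]⟩
    have : |pip p * z - pip p / 2| ≤ pip p / 2 := by
      rw [abs_le]
      constructor
      · nlinarith [hz.1]
      · nlinarith [hz.2]
    linarith
  have hL : LipschitzOnWith (Real.toNNReal (pip p)) (fun x => s (pip p * x)) (uIcc 0 1) := by
    rw [uIcc_of_le zero_le_one]
    refine LipschitzOnWith.of_dist_le_mul fun x hx z hz => ?_
    rw [Real.dist_eq, Real.dist_eq, Real.coe_toNNReal _ hP.le]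
    rw [hfold (pip p * x), hfold (pip p * z)]
    refine (hlip _ (hmem x hx) _ (hmem z hz)).trans ?_
    rw [show pip p / 2 - |pip p * x - pip p / 2| - (pip p / 2 - |pip p * z - pip p / 2|)
      = |pip p * z - pip p / 2| - |pip p * x - pip p / 2| by ring]
    refine (abs_abs_sub_abs_le_abs_sub _ _).trans ?_
    rw [show pip p * z - pip p / 2 - (pip p * x - pip p / 2) = pip p * (z - x) by ring,
      abs_mul, abs_of_pos hP, abs_sub_comm]
  have hac := hL.absolutelyContinuousOnInterval
  have hcont : ContinuousOn (fun x => s (pip p * x)) (Icc 0 1) := by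
    have := hL.continuousOn
    rwa [uIcc_of_le zero_le_one] at this
  have hcs : ContinuousOn (fun x => s (pip p * x) * Real.sin (π * x)) (Icc 0 1) :=
    hcont.mul (by fun_prop)
  refine ⟨fun hp2 => ?_, fun _ => ?_⟩
  · have hhalf : ∀ x ∈ Icc (0:ℝ) (1/2), Real.sin (π * x) ≤ s (pip p * x) := by
      intro x hx
      have hx' : pip p * x ∈ Icc (0:ℝ) (pip p / 2) :=
        ⟨mul_nonneg hP.le hx.1, by nlinarith [hx.2]⟩
      have hy := hval _ hx'
      have := Fp_cmp hp hp2 hy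
      rw [hinv₂ _ hx', hF1P] at this
      have h2 : π * x ≤ Real.arcsin (s (pip p * x)) := by
        have h3 : (pip p / 2) * (π * x) ≤ (pip p / 2) * Real.arcsin (s (pip p * x)) := by
          linarith
        exact le_of_mul_le_mul_left h3 (by positivity)
      rw [Real.le_arcsin_iff_sin_le' ] at h2
      · exact h2
      · constructor
        · nlinarith [Real.pi_pos, hx.1]
        · nlinarith [Real.pi_pos, hx.2]
    have hfull : ∀ x ∈ Icc (0:ℝ) 1, Real.sin (π * x) ≤ s (pip p * x) := by
      intro x hx
      rcases le_total x (1/2) with h | h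
      · exact hhalf x ⟨hx.1, h⟩
      · have := hhalf (1 - x) ⟨by linarith [hx.2], by linarith⟩
        rwa [show π * (1 - x) = π - π * x by ring, Real.sin_pi_sub,
          show pip p * (1 - x) = pip p - pip p * x by ring, hrefl] at this
    have h1 : 1 ≤ 2 * ∫ x in (0:ℝ)..1, s (pip p * x) * Real.sin (π * x) := by
      have : ∫ x in (0:ℝ)..1, Real.sin (π * x) * Real.sin (π * x) ≤
          ∫ x in (0:ℝ)..1, s (pip p * x) * Real.sin (π * x) := by
        refine intervalIntegral.integral_mono_on zero_le_one
          (by apply Continuous.intervalIntegrable; fun_prop)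
          (hcs.intervalIntegrable_of_Icc zero_le_one) fun x hx => ?_
        refine mul_le_mul_of_nonneg_right (hfull x hx) ?_
        exact Real.sin_nonneg_of_nonneg_of_le_pi (mul_nonneg Real.pi_pos.le hx.1)
          (by nlinarith [Real.pi_pos, hx.2])
      rw [int_sin_sq] at this
      linarith
    refine ⟨h1, ?_⟩
    have hcosac : AbsolutelyContinuousOnInterval (fun x => Real.cos (π * x)) 0 1 := by
      apply ContDiffOn.absolutelyContinuousOnInterval
      fun_prop
    have hparts := hcosac.integral_mul_deriv_eq_deriv_mul hac
    have hdc : ∀ x, deriv (fun x => Real.cos (π * x)) x = -(π * Real.sin (π * x)) := by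
      intro x
      have hl : HasDerivAt (fun x : ℝ => π * x) π x := by
        simpa using (hasDerivAt_id x).const_mul π
      rw [hl.cos.deriv]; ring
    have hds : ∀ x, deriv (fun x => s (pip p * x)) x = pip p * deriv s (pip p * x) := by
      intro x
      have := deriv_comp_mul_left (pip p) s x
      simpa using this
    simp only [hdc, hds, mul_one, mul_zero, hsP, hs0] at hparts
    have e1 : ∫ x in (0:ℝ)..1, Real.cos (π * x) * (pip p * deriv s (pip p * x)) =
        pip p * ∫ x in (0:ℝ)..1, deriv s (pip p * x) * Real.cos (π * x) := by
      rw [← intervalIntegral.integral_const_mul]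
      congr 1; ext x; ring
    have e2 : ∫ x in (0:ℝ)..1, -(π * Real.sin (π * x)) * s (pip p * x) =
        -π * ∫ x in (0:ℝ)..1, s (pip p * x) * Real.sin (π * x) := by
      rw [← intervalIntegral.integral_const_mul]
      congr 1; ext x; ring
    rw [e1, e2] at hparts
    rw [div_le_iff₀ hP]
    have := mul_le_mul_of_nonneg_left h1 Real.pi_pos.le
    linarith
  · have hsplit : ∫ x in (0:ℝ)..1, s (pip p * x) * Real.sin (π * x) =
        2 * ∫ x in (0:ℝ)..(1/2), s (pip p * x) * Real.sin (π * x) := by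
      have i1 : IntervalIntegrable (fun x => s (pip p * x) * Real.sin (π * x))
          MeasureTheory.volume 0 (1/2) :=
        (hcs.mono (Icc_subset_Icc le_rfl (by norm_num))).intervalIntegrable_of_Icc (by norm_num)
      have i2 : IntervalIntegrable (fun x => s (pip p * x) * Real.sin (π * x))
          MeasureTheory.volume (1/2) 1 :=
        (hcs.mono (Icc_subset_Icc (by norm_num) le_rfl)).intervalIntegrable_of_Icc (by norm_num)
      have hr := intervalIntegral.integral_comp_sub_left (a := 0) (b := 1/2)
        (fun x => s (pip p * x) * Real.sin (π * x)) 1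
      have hc : ∀ x, s (pip p * (1 - x)) * Real.sin (π * (1 - x)) =
          s (pip p * x) * Real.sin (π * x) := by
        intro x
        rw [show π * (1 - x) = π - π * x by ring, Real.sin_pi_sub,
          show pip p * (1 - x) = pip p - pip p * x by ring, hrefl]
      simp only [hc] at hr
      rw [show (1:ℝ) - 1/2 = 1/2 by norm_num, sub_zero] at hr
      rw [← intervalIntegral.integral_add_adjacent_intervals i1 i2, ← hr]
      ring
    have hge : ∀ x ∈ Ioo (0:ℝ) (1/2), 2 * x < s (pip p * x) := by
      intro x hx
      have hx' : pip p * x ∈ Icc (0:ℝ) (pip p / 2) :=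
        ⟨mul_nonneg hP.le hx.1.le, by nlinarith [hx.2]⟩
      have hy := hval _ hx'
      have hF := hinv₂ _ hx'
      have hy0 : s (pip p * x) ≠ 0 := by
        intro h
        rw [h, Fp_zero] at hF
        have := mul_pos hP hx.1
        linarith
      have hy1 : s (pip p * x) ≠ 1 := by
        intro h
        rw [h, hF1P] at hF
        nlinarith [hx.2]
      have := Fp_strict hp ⟨lt_of_le_of_ne hy.1 hy0.symm, lt_of_le_of_ne hy.2 hy1⟩
      rw [hF, hF1P] at this
      have h3 : (pip p / 2) * (2 * x) < (pip p / 2) * s (pip p * x) := by linarith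
      exact lt_of_mul_lt_mul_left h3 (by positivity)
    have hsin : ∀ x ∈ Ioo (0:ℝ) (1/2), 0 < Real.sin (π * x) := fun x hx =>
      Real.sin_pos_of_pos_of_lt_pi (mul_pos Real.pi_pos hx.1) (by nlinarith [Real.pi_pos, hx.2])
    have hlt : ∫ x in (0:ℝ)..(1/2), (2 * x) * Real.sin (π * x) <
        ∫ x in (0:ℝ)..(1/2), s (pip p * x) * Real.sin (π * x) := by
      refine intervalIntegral.integral_lt_integral_of_continuousOn_of_le_of_exists_lt
        (by norm_num) (by fun_prop) (hcs.mono (Icc_subset_Icc le_rfl (by norm_num)))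
        (fun x hx => ?_) ⟨1/4, by norm_num, ?_⟩
      · rcases eq_or_lt_of_le hx.2 with h | h
        · subst h
          have h1 : s (pip p * (1/2)) = 1 := by
            have := hinv₁ 1 (by simp)
            rwa [hF1P, show pip p / 2 = pip p * (1/2) by ring] at this
          rw [h1]; norm_num
        · exact (mul_lt_mul_of_pos_right (hge x ⟨hx.1, h⟩) (hsin x ⟨hx.1, h⟩)).le
      · exact mul_lt_mul_of_pos_right (hge _ (by norm_num)) (hsin _ (by norm_num))
    rw [int_x_sin] at hlt
    rw [hsplit]
    have : 8 / π ^ 2 = 4 * (2 / π ^ 2) := by ring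
    linarith
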